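/- Let ρ ∈ (0,1], δ ∈ (0,1], and let φ : (0,∞) → ℝ be bounded and uniformly ρ-Hölder continuous. Then for every x > 0, lim_{N→∞} (1/Γ(N+δ)) ∫_0^∞ φ(1/s) (N s x)^{N+δ} e^{−N s x} ds/s = φ(x), where Γ is the Gamma function, the limit being over integers N ≥ 1 and the power (Nsx)^{N+δ} being the real power of the positive number Nsx. -/

import Mathlib

open MeasureTheory Set Filter

/-!
The kernel `(N s x)^(N + δ) e^(-N s x) / (s Γ(N + δ))` is the density of the gamma distribution
with shape `N + δ` and rate `N x`, so the integral is the expectation of `s ↦ φ (1 / s)` under that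
law. Its mean `(N + δ) / (N x)` tends to `1 / x` and its variance `(N + δ) / (N x) ^ 2` tends to
`0`, so by Chebyshev's inequality the mass concentrates at `1 / x`, and the expectation of a bounded
function continuous there converges to its value `φ x`.
-/

open ProbabilityTheory
open scoped Topology ENNReal

section Concentration

variable {ι X E : Type*} {l : Filter ι}
  [NormedAddCommGroup E] [NormedSpace ℝ E] [CompleteSpace E]

theorem norm_integral_sub_le_add_mul_measureReal_compl [MeasurableSpace X] {μ : Measure X}
    [IsProbabilityMeasure μ] {f : X → E} {c : E} {ε D : ℝ} {U : Set X}
    (hf : AEStronglyMeasurable f μ) (hD : ∀ᵐ y ∂μ, ‖f y - c‖ ≤ D) (hε : 0 ≤ ε)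
    (hU : ∀ y ∈ U, ‖f y - c‖ ≤ ε) :
    ‖∫ y, f y ∂μ - c‖ ≤ ε + D * μ.real Uᶜ := by
  set T := toMeasurable μ Uᶜ
  have hT : MeasurableSet T := measurableSet_toMeasurable μ Uᶜ
  have hsub : Integrable (fun y => f y - c) μ := .of_bound (hf.sub aestronglyMeasurable_const) D hD
  have hint : Integrable f μ :=
    (hsub.add (integrable_const c)).congr (.of_forall fun y => sub_add_cancel (f y) c)
  have hind : Integrable (T.indicator fun _ => D) μ := (integrable_const D).indicator hT
  have hbound : ∀ᵐ y ∂μ, ‖f y - c‖ ≤ ε + T.indicator (fun _ => D) y := by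
    filter_upwards [hD] with y hy
    by_cases hyT : y ∈ T
    · rw [indicator_of_mem hyT]
      linarith
    · rw [indicator_of_notMem hyT, add_zero]
      exact hU y (by_contra fun h => hyT (subset_toMeasurable μ Uᶜ h))
  calc ‖∫ y, f y ∂μ - c‖ = ‖∫ y, (f y - c) ∂μ‖ := by
        rw [integral_sub hint (integrable_const c), integral_const, probReal_univ, one_smul]
    _ ≤ ∫ y, (ε + T.indicator (fun _ => D) y) ∂μ :=
        norm_integral_le_of_norm_le ((integrable_const ε).add hind) hbound
    _ = ε + D * μ.real Uᶜ := by
        rw [integral_add (integrable_const ε) hind, integral_const, probReal_univ, one_smul,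
          integral_indicator_const D hT, smul_eq_mul, mul_comm, measureReal_def,
          measure_toMeasurable, measureReal_def]

theorem tendsto_integral_of_tendsto_measure_compl_nhds [TopologicalSpace X] [MeasurableSpace X]
    {μ : ι → Measure X} {f : X → E} {x₀ : X} {M : ℝ}
    (hμ : ∀ᶠ i in l, IsProbabilityMeasure (μ i))
    (hconc : ∀ U ∈ 𝓝 x₀, Tendsto (fun i => μ i Uᶜ) l (𝓝 0))
    (hfm : ∀ᶠ i in l, AEStronglyMeasurable f (μ i)) (hfM : ∀ᶠ i in l, ∀ᵐ y ∂μ i, ‖f y‖ ≤ M)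
    (hf : ContinuousAt f x₀) :
    Tendsto (fun i => ∫ y, f y ∂μ i) l (𝓝 (f x₀)) := by
  rw [Metric.tendsto_nhds]
  intro ε hε
  set U := {y | ‖f y - f x₀‖ < ε / 2}
  have hU : U ∈ 𝓝 x₀ := by
    filter_upwards [Metric.tendsto_nhds.1 hf (ε / 2) (half_pos hε)] with y hy
    rwa [dist_eq_norm] at hy
  have hlim : Tendsto (fun i => ε / 2 + (M + ‖f x₀‖) * (μ i).real Uᶜ) l (𝓝 (ε / 2)) := by
    have h := (ENNReal.tendsto_toReal ENNReal.zero_ne_top).comp (hconc U hU)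
    simpa [measureReal_def] using (h.const_mul (M + ‖f x₀‖)).const_add (ε / 2)
  filter_upwards [hμ, hfm, hfM, hlim.eventually_lt_const (half_lt_self hε)] with i _ him hiM hlt
  rw [dist_eq_norm]
  refine (norm_integral_sub_le_add_mul_measureReal_compl him ?_ (half_pos hε).le
    fun y (hy : y ∈ U) => le_of_lt hy).trans_lt hlt
  filter_upwards [hiM] with y hy
  exact (norm_sub_le _ _).trans (add_le_add_left hy _)

theorem tendsto_measure_compl_nhds_of_tendsto_variance {μ : ι → Measure ℝ} {m : ℝ} {U : Set ℝ}
    (hμ : ∀ᶠ i in l, IsFiniteMeasure (μ i)) (hL2 : ∀ᶠ i in l, MemLp id 2 (μ i))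
    (hmean : Tendsto (fun i => (μ i)[id]) l (𝓝 m))
    (hvar : Tendsto (fun i => Var[id; μ i]) l (𝓝 0)) (hU : U ∈ 𝓝 m) :
    Tendsto (fun i => μ i Uᶜ) l (𝓝 0) := by
  obtain ⟨η, hη, hηU⟩ := Metric.mem_nhds_iff.1 hU
  have hbound : Tendsto (fun i => ENNReal.ofReal (Var[id; μ i] / (η / 2) ^ 2)) l (𝓝 0) := by
    simpa using ENNReal.tendsto_ofReal (hvar.div_const ((η / 2) ^ 2))
  refine tendsto_of_tendsto_of_tendsto_of_le_of_le' tendsto_const_nhds hbound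
    (.of_forall fun _ => zero_le) ?_
  filter_upwards [hμ, hL2, Metric.tendsto_nhds.1 hmean (η / 2) (half_pos hη)] with i _ hi hclose
  refine (measure_mono fun y hy => ?_).trans (meas_ge_le_variance_div_sq hi (half_pos hη))
  have hfar : η ≤ dist y m := not_lt.1 fun h => hy (hηU h)
  have htri := dist_triangle y (μ i)[id] m
  rw [mem_ofPred_eq, ← Real.dist_eq, id]
  linarith

end Concentration

section GammaMeasure

variable {a r : ℝ}

theorem gammaMeasure_eq_withDensity_restrict_Ioi (a r : ℝ) :
    gammaMeasure a r = (volume.restrict (Ioi 0)).withDensity (gammaPDF a r) := by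
  have hsupp : (Ici 0).indicator (gammaPDF a r) = gammaPDF a r :=
    indicator_eq_self.2 fun s hs => not_lt.1 fun hlt => hs (gammaPDF_of_neg hlt)
  rw [restrict_Ioi_eq_restrict_Ici, ← withDensity_indicator measurableSet_Ici, hsupp, gammaMeasure]

theorem gammaMeasure_absolutelyContinuous (a r : ℝ) :
    gammaMeasure a r ≪ volume.restrict (Ioi 0) := by
  rw [gammaMeasure_eq_withDensity_restrict_Ioi]
  exact withDensity_absolutelyContinuous _ _

theorem integral_gammaMeasure {E : Type*} [NormedAddCommGroup E] [NormedSpace ℝ E]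
    (ha : 0 < a) (hr : 0 < r) (f : ℝ → E) :
    ∫ s, f s ∂gammaMeasure a r =
      (1 / Real.Gamma a) • ∫ s in Ioi 0, ((r * s) ^ a * Real.exp (-(r * s)) / s) • f s := by
  have hmeas : Measurable (gammaPDF a r) := (measurable_gammaPDFReal a r).ennreal_ofReal
  rw [gammaMeasure_eq_withDensity_restrict_Ioi, integral_withDensity_eq_integral_toReal_smul
    hmeas (.of_forall fun _ => ENNReal.ofReal_lt_top), ← integral_smul]
  refine setIntegral_congr_fun measurableSet_Ioi fun s (hs : 0 < s) => ?_
  have hdensity : gammaPDFReal a r s =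
      1 / Real.Gamma a * ((r * s) ^ a * Real.exp (-(r * s)) / s) := by
    rw [gammaPDFReal, if_pos hs.le, Real.rpow_sub_one hs.ne', Real.mul_rpow hr.le hs.le]
    ring
  rw [gammaPDF, ENNReal.toReal_ofReal (gammaPDFReal_nonneg ha hr s), hdensity, mul_smul]

theorem integral_rpow_gammaMeasure {p : ℝ} (ha : 0 < a) (hr : 0 < r) (hp : 0 < a + p) :
    ∫ s, s ^ p ∂gammaMeasure a r = Real.Gamma (a + p) / (Real.Gamma a * r ^ p) := by
  have hkernel : EqOn (fun s => ((r * s) ^ a * Real.exp (-(r * s)) / s) • s ^ p)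
      (fun s => r ^ a * (s ^ (a + p - 1) * Real.exp (-(r * s)))) (Ioi 0) := by
    intro s (hs : 0 < s)
    simp only [smul_eq_mul]
    rw [Real.mul_rpow hr.le hs.le, Real.rpow_sub_one hs.ne', Real.rpow_add hs]
    ring
  rw [integral_gammaMeasure ha hr, setIntegral_congr_fun measurableSet_Ioi hkernel,
    integral_const_mul, Real.integral_rpow_mul_exp_neg_mul_Ioi hp hr, smul_eq_mul,
    one_div r, Real.inv_rpow hr.le, Real.rpow_add hr]
  field_simp

theorem integral_id_gammaMeasure (ha : 0 < a) (hr : 0 < r) :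
    (gammaMeasure a r)[id] = a / r := by
  have h := integral_rpow_gammaMeasure (p := 1) ha hr (by positivity)
  have hΓ := (Real.Gamma_pos_of_pos ha).ne'
  simp only [Real.rpow_one, Real.Gamma_add_one ha.ne'] at h
  simp only [id, h]
  field_simp

theorem integral_sq_gammaMeasure (ha : 0 < a) (hr : 0 < r) :
    ∫ s, s ^ 2 ∂gammaMeasure a r = a * (a + 1) / r ^ 2 := by
  have h := integral_rpow_gammaMeasure (p := 2) ha hr (by positivity)
  have hΓ : Real.Gamma (a + 2) = (a + 1) * (a * Real.Gamma a) := by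
    rw [← Real.Gamma_add_one ha.ne', ← Real.Gamma_add_one (by positivity)]
    congr 1
    ring
  have hΓpos := (Real.Gamma_pos_of_pos ha).ne'
  simp only [Real.rpow_two, hΓ] at h
  rw [h]
  field_simp

theorem memLp_id_two_gammaMeasure (ha : 0 < a) (hr : 0 < r) : MemLp id 2 (gammaMeasure a r) := by
  refine (memLp_two_iff_integrable_sq (by fun_prop)).2 (.of_integral_ne_zero ?_)
  simp only [id, integral_sq_gammaMeasure ha hr]
  positivity

theorem variance_id_gammaMeasure (ha : 0 < a) (hr : 0 < r) :
    Var[id; gammaMeasure a r] = a / r ^ 2 := by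
  have := isProbabilityMeasure_gammaMeasure ha hr
  rw [variance_eq_sub (memLp_id_two_gammaMeasure ha hr), integral_id_gammaMeasure ha hr]
  simp only [Pi.pow_apply, id, integral_sq_gammaMeasure ha hr]
  ring

theorem tendsto_integral_gammaMeasure {ι E : Type*} {l : Filter ι} [NormedAddCommGroup E]
    [NormedSpace ℝ E] [CompleteSpace E] {a r : ι → ℝ} {m : ℝ} {f : ℝ → E}
    (ha : ∀ᶠ i in l, 0 < a i) (hr : Tendsto r l atTop)
    (hm : Tendsto (fun i => a i / r i) l (𝓝 m))
    (hf : MemLp f ∞ (volume.restrict (Ioi 0))) (hcont : ContinuousAt f m) :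
    Tendsto (fun i => ∫ s, f s ∂gammaMeasure (a i) (r i)) l (𝓝 (f m)) := by
  have hpos : ∀ᶠ i in l, 0 < a i ∧ 0 < r i := ha.and (hr.eventually_gt_atTop 0)
  have hprob : ∀ᶠ i in l, IsProbabilityMeasure (gammaMeasure (a i) (r i)) :=
    hpos.mono fun _ h => isProbabilityMeasure_gammaMeasure h.1 h.2
  have hmean : Tendsto (fun i => (gammaMeasure (a i) (r i))[id]) l (𝓝 m) :=
    hm.congr' (hpos.mono fun _ h => (integral_id_gammaMeasure h.1 h.2).symm)
  have hvar : Tendsto (fun i => Var[id; gammaMeasure (a i) (r i)]) l (𝓝 0) := by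
    refine (hm.div_atTop hr).congr' (hpos.mono fun _ h => ?_)
    simp only [variance_id_gammaMeasure h.1 h.2, div_div, sq]
  refine tendsto_integral_of_tendsto_measure_compl_nhds hprob (fun U hU => ?_)
    (.of_forall fun i => hf.1.mono_ac (gammaMeasure_absolutelyContinuous _ _))
    (.of_forall fun i => (gammaMeasure_absolutelyContinuous _ _).ae_le
      (ae_le_lpNorm_exponent_top hf)) hcont
  exact tendsto_measure_compl_nhds_of_tendsto_variance (hprob.mono fun _ _ => inferInstance)
    (hpos.mono fun _ h => memLp_id_two_gammaMeasure h.1 h.2) hmean hvar hU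

end GammaMeasure

theorem quasiMeasurePreserving_inv_volume_real :
    Measure.QuasiMeasurePreserving (fun s : ℝ => s⁻¹) volume volume := by
  refine ⟨measurable_inv, .mk fun S hS hS0 => ?_⟩
  have hdiff : DifferentiableOn ℝ (fun s : ℝ => s⁻¹) (S \ {0}) :=
    differentiableOn_inv.mono fun s hs => hs.2
  have himage := addHaar_image_eq_zero_of_differentiableOn_of_addHaar_eq_zero volume hdiff
    (measure_mono_null sdiff_subset hS0)
  rw [Measure.map_apply measurable_inv hS]
  refine measure_mono_null (fun s hs => ?_)
    (measure_union_null himage (Real.volume_singleton (a := 0)))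
  rcases eq_or_ne s 0 with h0 | h0
  · exact .inr h0
  · exact .inl ⟨s⁻¹, ⟨hs, inv_ne_zero h0⟩, inv_inv s⟩

theorem memLp_top_comp_quasiMeasurePreserving {X Y E : Type*} [MeasurableSpace X]
    [MeasurableSpace Y] [NormedAddCommGroup E] {μ : Measure X} {ν : Measure Y} {f : Y → E}
    {g : X → Y} (hf : MemLp f ∞ ν) (hg : Measure.QuasiMeasurePreserving g μ ν) :
    MemLp (f ∘ g) ∞ μ :=
  memLp_top_of_bound (hf.1.comp_quasiMeasurePreserving hg) (lpNorm f ∞ ν)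
    (hg.ae (ae_le_lpNorm_exponent_top hf))

theorem continuousOn_of_dist_le_mul_rpow {X Y : Type*} [PseudoMetricSpace X] [PseudoMetricSpace Y]
    {C ρ : ℝ} {f : X → Y} {s : Set X} (hρ : 0 < ρ)
    (h : ∀ x ∈ s, ∀ y ∈ s, dist (f x) (f y) ≤ C * dist x y ^ ρ) : ContinuousOn f s := by
  lift ρ to NNReal using hρ.le
  have hHolder : HolderOnWith C.toNNReal ρ f s := by
    intro x hx y hy
    rw [edist_dist, edist_dist, ENNReal.ofReal_rpow_of_nonneg dist_nonneg hρ.le]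
    exact (ENNReal.ofReal_le_ofReal (h x hx y hy)).trans_eq
      (ENNReal.ofReal_mul' (Real.rpow_nonneg dist_nonneg ρ))
  exact hHolder.continuousOn hρ

theorem tendsto_add_const_div_mul_const_atTop (δ : ℝ) {x : ℝ} (hx : 0 < x) :
    Tendsto (fun N : ℝ => (N + δ) / (N * x)) atTop (𝓝 x⁻¹) := by
  have h : Tendsto (fun N : ℝ => x⁻¹ + δ / (N * x)) atTop (𝓝 (x⁻¹ + 0)) :=
    (tendsto_const_nhds.div_atTop (tendsto_id.atTop_mul_const hx)).const_add _
  rw [add_zero] at h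
  refine h.congr' ?_
  filter_upwards [eventually_ne_atTop 0] with N hN
  field_simp

theorem stmt_13_general {E : Type*} [NormedAddCommGroup E] [NormedSpace ℝ E] [CompleteSpace E]
    (δ : ℝ) {φ : ℝ → E} (hφ : MemLp φ ∞ (volume.restrict (Ioi 0))) {x : ℝ} (hx : 0 < x)
    (hcont : ContinuousAt φ x) :
    Tendsto (fun N : ℝ =>
      (1 / Real.Gamma (N + δ)) •
        ∫ s in Ioi (0 : ℝ), ((N * s * x) ^ (N + δ) * Real.exp (-(N * s * x)) / s) • φ (1 / s))
      atTop (𝓝 (φ x)) := by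
  have hshape : ∀ᶠ N : ℝ in atTop, 0 < N + δ :=
    (tendsto_atTop_add_const_right _ δ tendsto_id).eventually_gt_atTop 0
  have hrate : Tendsto (fun N : ℝ => N * x) atTop atTop := tendsto_id.atTop_mul_const hx
  have hinv : MemLp (φ ∘ fun s => s⁻¹) ∞ (volume.restrict (Ioi 0)) :=
    memLp_top_comp_quasiMeasurePreserving hφ
      (quasiMeasurePreserving_inv_volume_real.restrict fun s (hs : 0 < s) =>
        show 0 < s⁻¹ from inv_pos.2 hs)
  have hcont_inv : ContinuousAt (φ ∘ fun s => s⁻¹) x⁻¹ :=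
    .comp (by rwa [inv_inv]) (continuousAt_inv₀ (inv_ne_zero hx.ne'))
  have hlim := tendsto_integral_gammaMeasure hshape hrate
    (tendsto_add_const_div_mul_const_atTop δ hx) hinv hcont_inv
  rw [Function.comp_apply, inv_inv] at hlim
  refine hlim.congr' ?_
  filter_upwards [hshape, hrate.eventually_gt_atTop 0] with N ha hr
  simp only [integral_gammaMeasure ha hr, Function.comp_apply, one_div, mul_right_comm N x]

/-- Let `ρ ∈ (0,1]`, `δ ∈ (0,1]`, and `φ : (0,∞) → ℝ` bounded and uniformly `ρ`-Hölder.
Then for every `x > 0`,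
`(1/Γ(N+δ)) ∫_0^∞ φ(1/s) (Nsx)^{N+δ} e^{−Nsx} ds/s → φ(x)` as the integer `N → ∞`. -/
theorem stmt_13 (ρ δ : ℝ) (hρ : ρ ∈ Set.Ioc (0 : ℝ) 1) (hδ : δ ∈ Set.Ioc (0 : ℝ) 1)
    (φ : ℝ → ℝ) (M L : ℝ)
    (hbdd : ∀ x ∈ Set.Ioi (0 : ℝ), |φ x| ≤ M)
    (hHol : ∀ x ∈ Set.Ioi (0 : ℝ), ∀ y ∈ Set.Ioi (0 : ℝ), |φ x - φ y| ≤ L * |x - y| ^ ρ)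
    (x : ℝ) (hx : 0 < x) :
    Tendsto (fun N : ℕ =>
      (1 / Real.Gamma ((N : ℝ) + δ)) *
        ∫ s in Ioi (0 : ℝ),
          φ (1 / s) * ((N : ℝ) * s * x) ^ ((N : ℝ) + δ) *
            Real.exp (-((N : ℝ) * s * x)) / s)
      atTop (nhds (φ x)) := by
  have hcont : ContinuousOn φ (Ioi 0) := continuousOn_of_dist_le_mul_rpow hρ.1 hHol
  have hLp : MemLp φ ∞ (volume.restrict (Ioi 0)) :=
    memLp_top_of_bound (hcont.aestronglyMeasurable measurableSet_Ioi) M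
      (ae_restrict_of_forall_mem measurableSet_Ioi hbdd)
  refine ((stmt_13_general δ hLp hx (hcont.continuousAt (Ioi_mem_nhds hx))).comp
    tendsto_natCast_atTop_atTop).congr fun N => ?_
  simp only [Function.comp_apply, smul_eq_mul]
  congr! 3
  ring
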